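/- Let T > 0, let U be a metrizable Suslin space, let ϑ ∈ IC(0,T;U), and let R ≥ 0. Let 𝔍 be the set of Young measures μ on U over [0,T] satisfying ∫_{U×[0,T]} ϑ(t,u) μ(du,dt) ≤ R. Then 𝔍 is sequentially relatively compact in the stable topology: every sequence (μ_n) of elements of 𝔍 admits a subsequence (μ_{n_k}) and a Young measure μ on U over [0,T] such that μ_{n_k} converges stably to μ. -/

import Mathlib

open MeasureTheory Set Filter Topology ENNReal NNReal

/-- A Young measure on `U` over `[0,T]`: a Borel measure on `U × ℝ` whose marginal on the
time axis is Lebesgue measure on `[0,T]` (and which carries no mass outside `U × [0,T]`). -/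
def IsYoungMeasure {U : Type*} [MeasurableSpace U] (T : ℝ) (μ : Measure (U × ℝ)) : Prop :=
  ∀ D : Set ℝ, MeasurableSet D → μ (Set.univ ×ˢ D) = volume (D ∩ Set.Icc 0 T)

/-- Stable convergence of a sequence of Young measures on `U` over `[0,T]`: for every Borel
`D ⊆ [0,T]` and every bounded continuous `f : U → ℝ`, the integrals of `f(u)` over `U × D`
converge. -/
def StablyTendsTo {U : Type*} [TopologicalSpace U] [MeasurableSpace U] (T : ℝ)
    (μs : ℕ → Measure (U × ℝ)) (μ : Measure (U × ℝ)) : Prop :=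
  ∀ D : Set ℝ, MeasurableSet D → D ⊆ Set.Icc 0 T →
    ∀ f : BoundedContinuousFunction U ℝ,
      Filter.Tendsto (fun n => ∫ p in Set.univ ×ˢ D, f p.1 ∂(μs n)) Filter.atTop
        (nhds (∫ p in Set.univ ×ˢ D, f p.1 ∂μ))

/-- `U` is a Suslin space: a continuous surjective image of a Polish space. -/
def IsSuslin (U : Type*) [TopologicalSpace U] : Prop :=
  ∃ (S : Type) (ts : TopologicalSpace S), @PolishSpace S ts ∧
    ∃ φ : S → U, @Continuous S U ts _ φ ∧ Function.Surjective φ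

/-!
The sublevel sets `{u | ϑ x u ≤ M}` form a compact-valued map `Γ` of `x`. For `V` open,
`{x | Γ x ⊆ V}` is the complement of a projection, hence of an analytic set, so it is
null-measurable by Choquet's capacitability theorem: a continuous image of `ℕ → ℕ` is filled up in
measure by the images of boxes `Iic k`, with the bounds `k 0, k 1, …` chosen one at a time.
A Lusin argument over a countable basis then makes `Γ` upper hemicontinuous on a compact set `J`
of nearly full measure, so one compact set contains `Γ x` for all `x ∈ J`. Together with Markov's
inequality this gives tightness, and Prokhorov's theorem a weakly convergent subsequence. Weak
convergence improves to stable convergence because all the measures have the same marginal `ν`: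
test functions `f u * h x` with `h ∈ L¹(ν)` are uniformly approximated, in integral, by ones with
`h` bounded and continuous.
-/

section Capacitability

variable {α : Type*} [MeasurableSpace α] {μ : Measure α} {c : ℝ≥0∞}

lemma exists_lt_measure_image_inter_le {β : Type*} (f : β → α) (g : β → ℕ) {E : Set β}
    (hE : c < μ (f '' E)) : ∃ k, c < μ (f '' (E ∩ {x | g x ≤ k})) := by
  have hunion : f '' E = ⋃ k, f '' (E ∩ {x | g x ≤ k}) := by
    rw [← image_iUnion, ← inter_iUnion, iUnion_eq_univ_iff.2 fun x => ⟨g x, le_refl (g x)⟩,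
      inter_univ]
  have hmono : Monotone fun k => f '' (E ∩ {x | g x ≤ k}) := fun _ _ hkl =>
    image_mono (inter_subset_inter_right E fun _ hx => le_trans hx hkl)
  rw [hunion, hmono.measure_iUnion] at hE
  exact lt_iSup_iff.1 hE

lemma exists_forall_lt_measure_image_cylinder (f : (ℕ → ℕ) → α) (hf : c < μ (range f)) :
    ∃ k : ℕ → ℕ, ∀ n, c < μ (f '' {x | ∀ i < n, x i ≤ k i}) := by
  have next (n : ℕ) (E : {E : Set (ℕ → ℕ) // c < μ (f '' E)}) :
      ∃ k, c < μ (f '' (E.1 ∩ {x | x n ≤ k})) :=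
    exists_lt_measure_image_inter_le f (· n) E.2
  choose k hk using next
  let E (n : ℕ) : {E : Set (ℕ → ℕ) // c < μ (f '' E)} :=
    n.rec ⟨univ, by rwa [image_univ]⟩ fun n E => ⟨E.1 ∩ {x | x n ≤ k n E}, hk n E⟩
  have hE (n : ℕ) : (E n).1 = {x | ∀ i < n, x i ≤ k i (E i)} := by
    induction n with
    | zero => exact (eq_univ_of_forall fun _ _ hi => absurd hi (Nat.not_lt_zero _)).symm
    | succ n ih =>
      ext x
      simp only [mem_ofPred_eq, Nat.forall_lt_succ_right]
      exact and_congr_left fun _ => by rw [ih, mem_ofPred_eq]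
  exact ⟨fun n => k n (E n), fun n => hE n ▸ (E n).2⟩

lemma exists_cylinder_subset_of_isOpen {k : ℕ → ℕ} {V : Set (ℕ → ℕ)} (hV : IsOpen V)
    (hkV : Iic k ⊆ V) : ∃ n, {x : ℕ → ℕ | ∀ i < n, x i ≤ k i} ⊆ V := by
  by_contra! h
  choose x hxk hxV using fun n => not_subset.1 (h n)
  have hcompact : IsCompact (Iic k) := Icc_bot (a := k) ▸ isCompact_Icc
  obtain ⟨y, hyk, φ, hφ, hlim⟩ := hcompact.isSeqCompact (x := fun n => x n ⊓ k)
    fun n => mem_Iic.2 inf_le_right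
  have hx : Tendsto (x ∘ φ) atTop (𝓝 y) := by
    rw [tendsto_pi_nhds] at hlim ⊢
    intro i
    refine (hlim i).congr' ?_
    filter_upwards [eventually_gt_atTop i] with n hn
    exact inf_eq_left.2 (hxk (φ n) i (hn.trans_le hφ.le_apply))
  obtain ⟨n, hn⟩ := (hx.eventually_mem (hV.mem_nhds (hkV hyk))).exists
  exact hxV (φ n) hn

variable [TopologicalSpace α] {A : Set α}

lemma exists_isCompact_le_measure_of_analyticSet [μ.OuterRegular] (hA : AnalyticSet A)
    (hc : c < μ A) : ∃ K ⊆ A, IsCompact K ∧ c ≤ μ K := by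
  rw [AnalyticSet] at hA
  obtain rfl | ⟨f, hf, rfl⟩ := hA
  · simp at hc
  obtain ⟨k, hk⟩ := exists_forall_lt_measure_image_cylinder f hc
  have hcompact : IsCompact (Iic k) := Icc_bot (a := k) ▸ isCompact_Icc
  refine ⟨f '' Iic k, image_subset_range _ _, hcompact.image hf, ?_⟩
  rw [measure_eq_iInf_isOpen]
  refine le_iInf₂ fun V hkV => le_iInf fun hV => ?_
  obtain ⟨n, hn⟩ := exists_cylinder_subset_of_isOpen (hV.preimage hf) (image_subset_iff.1 hkV)
  exact (hk n).le.trans (measure_mono (image_subset_iff.2 hn))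

lemma nullMeasurableSet_of_analyticSet [T2Space α] [OpensMeasurableSpace α] [IsFiniteMeasure μ]
    [μ.OuterRegular] (hA : AnalyticSet A) : NullMeasurableSet A μ := by
  let B := (toMeasurable μ Aᶜ)ᶜ
  have hBA : B ⊆ A := compl_subset_comm.1 (subset_toMeasurable μ Aᶜ)
  have hB : MeasurableSet B := (measurableSet_toMeasurable μ Aᶜ).compl
  have hK {K : Set α} (hKA : K ⊆ A) (hK : IsCompact K) : μ K ≤ μ B := by
    refine measure_mono_ae (ae_le_set.2 ?_)
    rw [sdiff_eq, compl_compl, inter_comm, Measure.measure_toMeasurable_inter hK.measurableSet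
      (measure_ne_top μ _), (disjoint_compl_left_iff_subset.2 hKA).inter_eq, measure_empty]
  have hAB : μ A ≤ μ B := le_of_forall_lt_imp_le_of_dense fun c hc => by
    obtain ⟨K, hKA, hKc, hcK⟩ := exists_isCompact_le_measure_of_analyticSet hA hc
    exact hcK.trans (hK hKA hKc)
  exact hB.nullMeasurableSet.congr
    (ae_eq_of_subset_of_measure_ge hBA hAB hB.nullMeasurableSet (measure_ne_top μ A))

end Capacitability

section Suslin

variable {U X : Type*} [TopologicalSpace U] [TopologicalSpace X]

lemma IsSuslin.of_polishSpace (S : Type) [TopologicalSpace S] [PolishSpace S] : IsSuslin S :=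
  ⟨S, inferInstance, inferInstance, id, continuous_id, Function.surjective_id⟩

lemma IsSuslin.secondCountableTopology [TopologicalSpace.PseudoMetrizableSpace U]
    (hU : IsSuslin U) : SecondCountableTopology U := by
  obtain ⟨S, _, _, φ, hφ, hsurj⟩ := hU
  have := hsurj.denseRange.separableSpace hφ
  let := TopologicalSpace.pseudoMetrizableSpacePseudoMetric U
  exact UniformSpace.secondCountable_of_separable U

lemma IsSuslin.prod (hU : IsSuslin U) (hX : IsSuslin X) : IsSuslin (U × X) := by
  obtain ⟨S, _, _, φ, hφ, hφsurj⟩ := hU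
  obtain ⟨S', _, _, ψ, hψ, hψsurj⟩ := hX
  exact ⟨S × S', inferInstance, inferInstance, Prod.map φ ψ, hφ.prodMap hψ, hφsurj.prodMap hψsurj⟩

lemma IsSuslin.analyticSet [MeasurableSpace U] [BorelSpace U] (hU : IsSuslin U) {B : Set U}
    (hB : MeasurableSet B) : AnalyticSet B := by
  obtain ⟨S, _, _, φ, hφ, hsurj⟩ := hU
  borelize S
  rw [← image_preimage_eq B hsurj]
  exact (hφ.measurable hB).analyticSet.image_of_continuous hφ

lemma IsSuslin.innerRegular [MeasurableSpace U] [BorelSpace U] (hU : IsSuslin U) (μ : Measure U)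
    [μ.OuterRegular] : μ.InnerRegular where
  innerRegular B hB r hr := by
    obtain ⟨c, hrc, hcB⟩ := exists_between hr
    obtain ⟨K, hKB, hK, hcK⟩ :=
      exists_isCompact_le_measure_of_analyticSet (hU.analyticSet hB) hcB
    exact ⟨K, hKB, hK, hrc.trans_le hcK⟩

end Suslin

section MultivaluedLusin

variable {U X : Type*} [TopologicalSpace U] [TopologicalSpace X]

lemma exists_finset_countableBasis_between [SecondCountableTopology U] {C W : Set U}
    (hC : IsCompact C) (hW : IsOpen W) (hCW : C ⊆ W) :
    ∃ s : Finset (TopologicalSpace.countableBasis U),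
      C ⊆ ⋃ b ∈ s, (b : Set U) ∧ ⋃ b ∈ s, (b : Set U) ⊆ W := by
  have hbasis := TopologicalSpace.isBasis_countableBasis U
  obtain ⟨S, hS, rfl⟩ := hbasis.open_eq_sUnion hW
  rw [sUnion_eq_iUnion] at hCW
  obtain ⟨t, ht⟩ := hC.elim_finite_subcover (fun b : S => (b : Set U))
    (fun b => hbasis.isOpen (hS b.2)) hCW
  classical
  refine ⟨t.image (inclusion hS), ?_, ?_⟩
  · simpa only [Finset.set_biUnion_finset_image, coe_inclusion] using ht
  · simpa only [Finset.set_biUnion_finset_image, coe_inclusion] using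
      iUnion₂_subset fun b _ => subset_sUnion_of_mem b.2

lemma isCompact_biUnion_of_upperHemicontinuousOn {Γ : X → Set U} {J : Set X} (hJ : IsCompact J)
    (hΓ : UpperHemicontinuousOn Γ J) (hcompact : ∀ x ∈ J, IsCompact (Γ x)) :
    IsCompact (⋃ x ∈ J, Γ x) := by
  refine isCompact_of_finite_subcover fun {ι} W hW hcover => ?_
  suffices ∃ t : Finset ι, ⋃ x ∈ J, Γ x ⊆ ⋃ i ∈ t, W i from this
  refine hJ.induction_on (p := fun S => ∃ t : Finset ι, ⋃ x ∈ S, Γ x ⊆ ⋃ i ∈ t, W i)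
    ⟨∅, by simp⟩ (fun S S' hS ⟨t, ht⟩ => ⟨t, (biUnion_subset_biUnion_left hS).trans ht⟩) ?_ ?_
  · rintro S S' ⟨t, ht⟩ ⟨t', ht'⟩
    classical
    refine ⟨t ∪ t', ?_⟩
    rw [biUnion_union, Finset.set_biUnion_union]
    exact union_subset_union ht ht'
  · intro x hx
    obtain ⟨t, ht⟩ := (hcompact x hx).elim_finite_subcover W hW
      ((subset_biUnion_of_mem (u := Γ) hx).trans hcover)
    exact ⟨_, hΓ.forall_isOpen x hx _ (isOpen_biUnion fun i _ => hW i) ht,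
      t, iUnion₂_subset fun _ => id⟩

variable [MeasurableSpace X] {ν : Measure X} [IsFiniteMeasure ν]
  [ν.OuterRegular] {ε : ℝ≥0∞}

lemma exists_isCompact_forall_inter_eq_inter_isOpen (hν : IsTightMeasureSet {ν}) {ι : Type*}
    [Countable ι] {A : ι → Set X} (hA : ∀ i, NullMeasurableSet (A i) ν) (hε : ε ≠ 0) :
    ∃ J, IsCompact J ∧ ν Jᶜ ≤ ε ∧ ∀ i, ∃ O, IsOpen O ∧ J ∩ A i = J ∩ O := by
  have hε2 : ε / 2 ≠ 0 := (ENNReal.half_pos hε).ne'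
  obtain ⟨K, hK, hKε⟩ := isTightMeasureSet_iff_exists_isCompact_measure_compl_le.1 hν _
    (pos_iff_ne_zero.2 hε2)
  obtain ⟨δ, hδ, hδε⟩ := ENNReal.exists_pos_sum_of_countable' hε2 ι
  choose O hAO hO hOδ using fun i =>
    (A i).exists_isOpen_lt_add (measure_ne_top ν _) (hδ i).ne'
  have hdiff : ν (⋃ i, O i \ A i) < ε / 2 :=
    calc ν (⋃ i, O i \ A i) ≤ ∑' i, ν (O i \ A i) := measure_iUnion_le _
      _ ≤ ∑' i, δ i := ENNReal.tsum_le_tsum fun i =>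
          (measure_sdiff_lt_of_lt_add (hA i) (hAO i) (measure_ne_top ν _) (hOδ i)).le
      _ < ε / 2 := hδε
  obtain ⟨W, hdiffW, hW, hWε⟩ := Set.exists_isOpen_lt_of_lt _ _ hdiff
  refine ⟨K \ W, hK.diff hW, ?_, fun i => ⟨O i, hO i, ?_⟩⟩
  · calc ν (K \ W)ᶜ ≤ ν Kᶜ + ν W := by
          rw [sdiff_eq, compl_inter, compl_compl]
          exact measure_union_le _ _
      _ ≤ ε / 2 + ε / 2 := add_le_add (hKε ν rfl) hWε.le
      _ = ε := ENNReal.add_halves ε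
  · refine (inter_subset_inter_right _ (hAO i)).antisymm fun x hx => ⟨hx.1, ?_⟩
    by_contra hxA
    exact hx.1.2 (hdiffW (mem_iUnion.2 ⟨i, hx.2, hxA⟩))

lemma exists_isCompact_upperHemicontinuousOn [SecondCountableTopology U]
    (hν : IsTightMeasureSet {ν}) {Γ : X → Set U} (hcompact : ∀ x, IsCompact (Γ x))
    (hΓ : ∀ V, IsOpen V → NullMeasurableSet {x | Γ x ⊆ V} ν) (hε : ε ≠ 0) :
    ∃ J, IsCompact J ∧ ν Jᶜ ≤ ε ∧ UpperHemicontinuousOn Γ J := by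
  have := (TopologicalSpace.countable_countableBasis U).to_subtype
  let V (s : Finset (TopologicalSpace.countableBasis U)) : Set U := ⋃ b ∈ s, b
  have hV (s) : IsOpen (V s) :=
    isOpen_biUnion fun b _ => TopologicalSpace.isOpen_of_mem_countableBasis b.2
  obtain ⟨J, hJ, hJε, hopen⟩ :=
    exists_isCompact_forall_inter_eq_inter_isOpen hν (fun s => hΓ (V s) (hV s)) hε
  refine ⟨J, hJ, hJε, .of_forall_isOpen fun x hx W hW hxW => ?_⟩
  obtain ⟨s, hxs, hsW⟩ := exists_finset_countableBasis_between (hcompact x) hW hxW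
  obtain ⟨O, hO, hJO⟩ := hopen s
  have hxO : x ∈ O := (hJO.subset ⟨hx, hxs⟩).2
  filter_upwards [self_mem_nhdsWithin, mem_nhdsWithin_of_mem_nhds (hO.mem_nhds hxO)] with y hyJ hyO
  exact (hJO.superset ⟨hyJ, hyO⟩).2.trans hsW

lemma exists_isCompact_isCompact_forall_subset [SecondCountableTopology U]
    (hν : IsTightMeasureSet {ν}) {Γ : X → Set U} (hcompact : ∀ x, IsCompact (Γ x))
    (hΓ : ∀ V, IsOpen V → NullMeasurableSet {x | Γ x ⊆ V} ν) (hε : ε ≠ 0) :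
    ∃ J C, IsCompact J ∧ IsCompact C ∧ ν Jᶜ ≤ ε ∧ ∀ x ∈ J, Γ x ⊆ C := by
  obtain ⟨J, hJ, hJε, hΓJ⟩ := exists_isCompact_upperHemicontinuousOn hν hcompact hΓ hε
  exact ⟨J, ⋃ x ∈ J, Γ x, hJ,
    isCompact_biUnion_of_upperHemicontinuousOn hJ hΓJ fun x _ => hcompact x, hJε,
    fun x hx => subset_biUnion_of_mem (u := Γ) hx⟩

end MultivaluedLusin

section Tightness

variable {U X : Type*} [TopologicalSpace U] [TopologicalSpace.MetrizableSpace U]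
  [MeasurableSpace U] [BorelSpace U] [TopologicalSpace X] [TopologicalSpace.MetrizableSpace X]
  [MeasurableSpace X] [BorelSpace X]

lemma IsSuslin.nullMeasurableSet_setOf_section_subset (hU : IsSuslin U) (hX : IsSuslin X)
    (ν : Measure X) [IsFiniteMeasure ν] {B : Set (U × X)} (hB : MeasurableSet B) {V : Set U}
    (hV : MeasurableSet V) : NullMeasurableSet {x | {u | (u, x) ∈ B} ⊆ V} ν := by
  have := hU.secondCountableTopology
  have hproj : {x | {u | (u, x) ∈ B} ⊆ V}ᶜ = Prod.snd '' (B \ Prod.fst ⁻¹' V) := by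
    ext x
    simp [not_subset]
  rw [← NullMeasurableSet.compl_iff, hproj]
  exact nullMeasurableSet_of_analyticSet (((hU.prod hX).analyticSet
    (hB.diff (measurable_fst hV))).image_of_continuous continuous_snd)

lemma isTightMeasureSet_setOf_map_snd_eq_and_lintegral_le (hU : IsSuslin U) (hX : IsSuslin X)
    (ν : Measure X) [IsFiniteMeasure ν] {ϑ : X → U → ℝ≥0∞}
    (hϑmeas : Measurable fun p : U × X => ϑ p.2 p.1)
    (hϑinf : ∀ x, ∀ M : ℝ≥0, IsCompact {u | ϑ x u ≤ M}) (R : ℝ≥0) :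
    IsTightMeasureSet
      {μ : Measure (U × X) | μ.map Prod.snd = ν ∧ ∫⁻ p, ϑ p.2 p.1 ∂μ ≤ R} := by
  have := hU.secondCountableTopology
  have := hX.innerRegular ν
  refine isTightMeasureSet_iff_exists_isCompact_measure_compl_le.2 fun ε hε => ?_
  have hε2 : ε / 2 ≠ 0 := (ENNReal.half_pos hε.ne').ne'
  obtain ⟨M, hM⟩ : ∃ M : ℝ≥0, R < M * (ε / 2) := by
    obtain ⟨n, hn⟩ := ENNReal.exists_nat_mul_gt hε2 (coe_ne_top (r := R))
    exact ⟨n, by simpa only [coe_natCast] using hn⟩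
  obtain ⟨J, C, hJ, hC, hJε, hJC⟩ := exists_isCompact_isCompact_forall_subset
    (isTightMeasureSet_singleton_of_innerRegular (μ := ν)) (fun x => hϑinf x M)
    (fun V hV => hU.nullMeasurableSet_setOf_section_subset hX ν
      (measurableSet_le hϑmeas measurable_const) hV.measurableSet) hε2
  refine ⟨C ×ˢ J, hC.prod hJ, fun μ ⟨hμν, hμR⟩ => ?_⟩
  have hcover : (C ×ˢ J)ᶜ ⊆ {p | (M : ℝ≥0∞) ≤ ϑ p.2 p.1} ∪ Prod.snd ⁻¹' Jᶜ := by
    rintro ⟨u, x⟩ hux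
    by_contra! h
    obtain ⟨hlt, hx⟩ := not_or.1 h
    have hϑM : ϑ x u ≤ M := (not_le.1 hlt).le
    exact hux ⟨hJC x (not_not.1 hx) hϑM, not_not.1 hx⟩
  have hMarkov : μ {p | (M : ℝ≥0∞) ≤ ϑ p.2 p.1} ≤ ε / 2 := by
    refine (lt_of_mul_lt_mul_left' (a := (M : ℝ≥0∞)) ?_).le
    calc M * μ {p | M ≤ ϑ p.2 p.1} ≤ ∫⁻ p, ϑ p.2 p.1 ∂μ := mul_meas_ge_le_lintegral hϑmeas _
      _ ≤ R := hμR
      _ < M * (ε / 2) := hM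
  calc μ (C ×ˢ J)ᶜ ≤ μ {p | (M : ℝ≥0∞) ≤ ϑ p.2 p.1} + μ (Prod.snd ⁻¹' Jᶜ) :=
        (measure_mono hcover).trans (measure_union_le _ _)
    _ ≤ ε / 2 + ν Jᶜ :=
        add_le_add hMarkov (hμν ▸ Measure.le_map_apply measurable_snd.aemeasurable _)
    _ ≤ ε / 2 + ε / 2 := by gcongr
    _ = ε := ENNReal.add_halves ε

end Tightness

section WeakLimits

variable {E X ι : Type*} [TopologicalSpace E] [MeasurableSpace E] [TopologicalSpace X]
  [MeasurableSpace X] [BorelSpace X] {ν : Measure X} {l : Filter ι}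

lemma exists_subseq_tendsto_of_isTightMeasureSet [TopologicalSpace.MetrizableSpace E]
    [TopologicalSpace.SeparableSpace E] [BorelSpace E] {μs : ℕ → FiniteMeasure E} {c : ℝ≥0}
    (hmass : ∀ n, (μs n).mass = c)
    (htight : IsTightMeasureSet (range fun n => (μs n : Measure E))) :
    ∃ φ : ℕ → ℕ, StrictMono φ ∧ ∃ μ, Tendsto (fun n => μs (φ n)) atTop (𝓝 μ) := by
  obtain rfl | hc := eq_or_ne c 0
  · refine ⟨id, strictMono_id, 0, tendsto_const_nhds.congr fun n => ?_⟩
    exact ((FiniteMeasure.mass_zero_iff _).1 (hmass n)).symm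
  have hne (n : ℕ) : μs n ≠ 0 := (FiniteMeasure.mass_nonzero_iff _).1 ((hmass n).trans_ne hc)
  have : Nonempty E := by
    by_contra h
    have := not_nonempty_iff.1 h
    exact hne 0 (Subtype.ext (Measure.eq_zero_of_isEmpty _))
  let P (n : ℕ) : ProbabilityMeasure E := (μs n).normalize
  have hP (n : ℕ) : (P n : Measure E) = c⁻¹ • (μs n : Measure E) := by
    rw [FiniteMeasure.toMeasure_normalize_eq_of_nonzero _ (hne n), hmass]
  have hPtight : IsTightMeasureSet {ρ | ∃ Q ∈ range P, (Q : Measure E) = ρ} := by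
    rw [isTightMeasureSet_iff_exists_isCompact_measure_compl_le] at htight ⊢
    intro ε hε
    obtain ⟨K, hK, hKε⟩ := htight (c * ε) (ENNReal.mul_pos (coe_ne_zero.2 hc) hε.ne')
    refine ⟨K, hK, ?_⟩
    rintro _ ⟨_, ⟨n, rfl⟩, rfl⟩
    rw [hP, Measure.smul_apply, ENNReal.smul_def, coe_inv hc, smul_eq_mul,
      ENNReal.inv_mul_le_iff (coe_ne_zero.2 hc) coe_ne_top]
    exact hKε _ (mem_range_self n)
  obtain ⟨Q, -, φ, hφ, hlim⟩ := (isCompact_closure_of_isTightMeasureSet hPtight).isSeqCompact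
    fun n => subset_closure (mem_range_self n)
  refine ⟨φ, hφ, c • Q.toFiniteMeasure, ?_⟩
  have hscale : Tendsto (fun n => c • (P (φ n)).toFiniteMeasure) atTop
      (𝓝 (c • Q.toFiniteMeasure)) :=
    ((ProbabilityMeasure.toFiniteMeasure_continuous.tendsto Q).comp hlim).const_smul c
  refine hscale.congr fun n => ?_
  rw [← hmass (φ n), ← FiniteMeasure.self_eq_mass_smul_normalize]

lemma map_eq_of_tendsto [OpensMeasurableSpace E] [HasOuterApproxClosed X] [l.NeBot]
    {μs : ι → FiniteMeasure E} {μ : FiniteMeasure E} (hlim : Tendsto μs l (𝓝 μ)) {f : E → X}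
    (hf : Continuous f) (hμs : ∀ i, (μs i : Measure E).map f = ν) :
    (μ : Measure E).map f = ν := by
  have hmap := FiniteMeasure.tendsto_map_of_tendsto_of_continuous μs μ hlim hf
  obtain ⟨i⟩ := l.nonempty_of_neBot
  have hconst (j : ι) : (μs j).map f = (μs i).map f := Subtype.ext ((hμs j).trans (hμs i).symm)
  simp only [hconst] at hmap
  rw [← hμs i, ← FiniteMeasure.toMeasure_map, ← FiniteMeasure.toMeasure_map,
    tendsto_nhds_unique hmap tendsto_const_nhds]

end WeakLimits

section StableConvergence

variable {U X : Type*} [MeasurableSpace U] [MeasurableSpace X]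

lemma setIntegral_univ_prod_eq_integral_mul_indicator {μ : Measure (U × X)} {D : Set X}
    (hD : MeasurableSet D) (f : U → ℝ) :
    ∫ p in univ ×ˢ D, f p.1 ∂μ = ∫ p, f p.1 * D.indicator 1 p.2 ∂μ := by
  rw [← integral_indicator (MeasurableSet.univ.prod hD)]
  refine integral_congr_ae (ae_of_all _ fun p => ?_)
  by_cases hp : p.2 ∈ D <;> simp [hp]

variable [TopologicalSpace U] [OpensMeasurableSpace U]

lemma integrable_fst_mul_snd {μ : Measure (U × X)}
    (f : BoundedContinuousFunction U ℝ) {h : X → ℝ} (hh : Integrable h (μ.map Prod.snd)) :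
    Integrable (fun p => f p.1 * h p.2) μ :=
  (hh.comp_measurable measurable_snd).bdd_mul
    (f.continuous.measurable.comp measurable_fst).aestronglyMeasurable
    (ae_of_all _ fun p => f.norm_coe_le_norm p.1)

lemma dist_integral_fst_mul_snd_le {μ : Measure (U × X)}
    (f : BoundedContinuousFunction U ℝ) {g h : X → ℝ} (hg : Integrable g (μ.map Prod.snd))
    (hh : Integrable h (μ.map Prod.snd)) :
    dist (∫ p, f p.1 * g p.2 ∂μ) (∫ p, f p.1 * h p.2 ∂μ) ≤
      ‖f‖ * ∫ x, ‖g x - h x‖ ∂μ.map Prod.snd := by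
  have hgh : Integrable (fun x => ‖g x - h x‖) (μ.map Prod.snd) := (hg.sub hh).norm
  rw [dist_eq_norm, ← integral_sub (integrable_fst_mul_snd f hg) (integrable_fst_mul_snd f hh),
    integral_map measurable_snd.aemeasurable hgh.aestronglyMeasurable, ← integral_const_mul]
  refine norm_integral_le_of_norm_le ((hgh.comp_measurable measurable_snd).const_mul _)
    (ae_of_all _ fun p => ?_)
  rw [← mul_sub, norm_mul]
  gcongr
  exact f.norm_coe_le_norm p.1

lemma tendsto_integral_fst_mul_snd [TopologicalSpace X] [NormalSpace X] [BorelSpace X]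
    [OpensMeasurableSpace (U × X)] {ν : Measure X} [ν.WeaklyRegular] {ι : Type*} {l : Filter ι}
    {μs : ι → FiniteMeasure (U × X)} {μ : FiniteMeasure (U × X)}
    (hlim : Tendsto μs l (𝓝 μ)) (hμs : ∀ i, (μs i : Measure (U × X)).map Prod.snd = ν)
    (hμ : (μ : Measure (U × X)).map Prod.snd = ν) (f : BoundedContinuousFunction U ℝ) {h : X → ℝ}
    (hh : Integrable h ν) :
    Tendsto (fun i => ∫ p, f p.1 * h p.2 ∂(μs i : Measure (U × X))) l
      (𝓝 (∫ p, f p.1 * h p.2 ∂(μ : Measure (U × X)))) := by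
  refine Metric.tendsto_nhds.2 fun ε hε => ?_
  obtain ⟨g, hgh, hg⟩ :=
    hh.exists_boundedContinuous_integral_sub_le (show 0 < ε / (3 * (‖f‖ + 1)) by positivity)
  have happrox {ρ : Measure (U × X)} (hρ : ρ.map Prod.snd = ν) :
      dist (∫ p, f p.1 * h p.2 ∂ρ) (∫ p, f p.1 * g p.2 ∂ρ) ≤ ε / 3 := by
    subst hρ
    calc dist (∫ p, f p.1 * h p.2 ∂ρ) (∫ p, f p.1 * g p.2 ∂ρ)
        ≤ ‖f‖ * ∫ x, ‖h x - g x‖ ∂ρ.map Prod.snd := dist_integral_fst_mul_snd_le f hh hg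
      _ ≤ (‖f‖ + 1) * (ε / (3 * (‖f‖ + 1))) := by gcongr; exact le_add_of_nonneg_right zero_le_one
      _ = ε / 3 := by field_simp
  let F : BoundedContinuousFunction (U × X) ℝ :=
    f.compContinuous ⟨Prod.fst, continuous_fst⟩ * g.compContinuous ⟨Prod.snd, continuous_snd⟩
  have hF := FiniteMeasure.tendsto_iff_forall_integral_tendsto.1 hlim F
  filter_upwards [Metric.tendsto_nhds.1 hF (ε / 3) (by positivity)] with i hi
  calc dist (∫ p, f p.1 * h p.2 ∂(μs i).toMeasure) (∫ p, f p.1 * h p.2 ∂μ.toMeasure)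
      ≤ dist (∫ p, f p.1 * h p.2 ∂(μs i).toMeasure) (∫ p, F p ∂(μs i).toMeasure)
        + dist (∫ p, F p ∂(μs i).toMeasure) (∫ p, F p ∂μ.toMeasure)
        + dist (∫ p, F p ∂μ.toMeasure) (∫ p, f p.1 * h p.2 ∂μ.toMeasure) :=
        dist_triangle4 _ _ _ _
    _ < ε / 3 + ε / 3 + ε / 3 :=
        add_lt_add_of_lt_of_le (add_lt_add_of_le_of_lt (happrox (hμs i)) hi)
          ((dist_comm _ _).trans_le (happrox hμ))
    _ = ε := add_thirds ε

end StableConvergence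

theorem young_measures_flexibly_tight_seq_compact_general {U X : Type*}
    [TopologicalSpace U] [TopologicalSpace.MetrizableSpace U] [MeasurableSpace U] [BorelSpace U]
    [TopologicalSpace X] [TopologicalSpace.MetrizableSpace X] [MeasurableSpace X] [BorelSpace X]
    (hU : IsSuslin U) (hX : IsSuslin X) (ν : Measure X) [IsFiniteMeasure ν] (ϑ : X → U → ℝ≥0∞)
    (hϑmeas : Measurable fun p : U × X => ϑ p.2 p.1)
    (hϑinf : ∀ x, ∀ M : ℝ≥0, IsCompact {u | ϑ x u ≤ M}) (R : ℝ≥0) (μs : ℕ → Measure (U × X))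
    (hμs : ∀ n, (μs n).map Prod.snd = ν) (hbound : ∀ n, ∫⁻ p, ϑ p.2 p.1 ∂μs n ≤ R) :
    ∃ φ : ℕ → ℕ, StrictMono φ ∧ ∃ μ : Measure (U × X), μ.map Prod.snd = ν ∧
      ∀ D, MeasurableSet D → ∀ f : BoundedContinuousFunction U ℝ,
        Tendsto (fun n => ∫ p in univ ×ˢ D, f p.1 ∂μs (φ n)) atTop
          (𝓝 (∫ p in univ ×ˢ D, f p.1 ∂μ)) := by
  have := hU.secondCountableTopology
  have := hX.secondCountableTopology
  have hfinite (n : ℕ) : IsFiniteMeasure (μs n) :=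
    have : IsFiniteMeasure ((μs n).map Prod.snd) := by rwa [hμs n]
    Measure.isFiniteMeasure_of_map measurable_snd.aemeasurable
  have htight : IsTightMeasureSet (range μs) :=
    (isTightMeasureSet_setOf_map_snd_eq_and_lintegral_le hU hX ν hϑmeas hϑinf R).subset
      (range_subset_iff.2 fun n => ⟨hμs n, hbound n⟩)
  let ρs (n : ℕ) : FiniteMeasure (U × X) := ⟨μs n, hfinite n⟩
  have hmass (n : ℕ) : (ρs n).mass = (ν univ).toNNReal := by
    rw [← hμs n, Measure.map_apply measurable_snd .univ]
    rfl
  obtain ⟨φ, hφ, μ, hlim⟩ := exists_subseq_tendsto_of_isTightMeasureSet hmass htight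
  have hμ := map_eq_of_tendsto hlim continuous_snd fun n => hμs (φ n)
  refine ⟨φ, hφ, μ, hμ, fun D hD f => ?_⟩
  simp only [setIntegral_univ_prod_eq_integral_mul_indicator hD]
  exact tendsto_integral_fst_mul_snd hlim (fun n => hμs (φ n)) hμ f
    ((integrable_const 1).indicator hD)

section YoungMeasure

variable {U : Type*} [MeasurableSpace U] {T : ℝ} {μ : Measure (U × ℝ)}

lemma isYoungMeasure_iff_map_snd_eq :
    IsYoungMeasure T μ ↔ μ.map Prod.snd = volume.restrict (Icc 0 T) := by
  rw [Measure.ext_iff]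
  refine forall₂_congr fun D hD => ?_
  rw [Measure.map_apply measurable_snd hD, Measure.restrict_apply hD, univ_prod]

lemma IsYoungMeasure.restrict_univ_prod_Icc (hμ : IsYoungMeasure T μ) :
    μ.restrict (univ ×ˢ Icc 0 T) = μ := by
  have hnull : μ (univ ×ˢ Icc 0 T)ᶜ = 0 := by
    rw [univ_prod, ← preimage_compl, ← univ_prod, hμ _ measurableSet_Icc.compl, compl_inter_self,
      measure_empty]
  exact Measure.restrict_eq_self_of_ae_mem hnull

end YoungMeasure

/-- Prohorov criterion: a set of Young measures on a metrizable Suslin space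
with uniformly bounded integral of an inf-compact integrand `ϑ` is sequentially relatively
compact in the stable topology. -/
theorem young_measures_flexibly_tight_seq_compact
    (T : ℝ) (hT : 0 < T)
    (U : Type*) [TopologicalSpace U] [TopologicalSpace.MetrizableSpace U]
    [MeasurableSpace U] [BorelSpace U] (hU : IsSuslin U)
    (ϑ : ℝ → U → ℝ≥0∞) (hϑmeas : Measurable fun p : U × ℝ => ϑ p.2 p.1)
    (hϑinf : ∀ t : ℝ, ∀ R : NNReal, IsCompact {u : U | ϑ t u ≤ R})
    (R : NNReal)
    (μs : ℕ → Measure (U × ℝ))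
    (hyoung : ∀ n, IsYoungMeasure T (μs n))
    (hbound : ∀ n, (∫⁻ p in Set.univ ×ˢ Set.Icc (0:ℝ) T, ϑ p.2 p.1 ∂(μs n)) ≤ R) :
    ∃ φ : ℕ → ℕ, StrictMono φ ∧ ∃ μ : Measure (U × ℝ), IsYoungMeasure T μ ∧
      StablyTendsTo T (fun k => μs (φ k)) μ := by
  obtain ⟨φ, hφ, μ, hμ, hlim⟩ := young_measures_flexibly_tight_seq_compact_general hU
    (.of_polishSpace ℝ) (volume.restrict (Icc 0 T)) ϑ hϑmeas hϑinf R μs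
    (fun n => isYoungMeasure_iff_map_snd_eq.1 (hyoung n))
    (fun n => (hyoung n).restrict_univ_prod_Icc ▸ hbound n)
  exact ⟨φ, hφ, μ, isYoungMeasure_iff_map_snd_eq.2 hμ, fun D hD _ => hlim D hD⟩
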